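/- There exist constants ν₀ ∈ (0,1], C₁ > 0, C₂ ∈ (C₁ν₀, 1) and c, C > 0, depending only on f and D, such that for every ν ∈ (0,ν₀] and every ℓ in the inertial range J₂ = (C₁ν, C₂], the flatness F(ℓ) = S₄(ℓ)/S₂(ℓ)² satisfies c ℓ⁻¹ ≤ F(ℓ) ≤ C ℓ⁻¹. -/

import Mathlib

open MeasureTheory Set
open scoped ENNReal

/-- The `L^p` norm (on the circle, i.e. over one period `(0,1]`) of the `m`-th
derivative of a function `v : ℝ → ℝ` (identified with a function on `S¹ = ℝ/ℤ`). -/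
noncomputable def sobLp (m : ℕ) (p : ℝ≥0∞) (v : ℝ → ℝ) : ℝ :=
  (eLpNorm (iteratedDeriv m v) p (volume.restrict (Ioc (0:ℝ) 1))).toReal

/-- `u` is a smooth, space-periodic, zero-mean-value solution of the generalised
Burgers equation `u_t + f'(u) u_x - ν u_xx = 0` with strongly convex `f` and
nonzero initial condition. -/
structure IsBurgersSolution (f : ℝ → ℝ) (σ ν : ℝ) (u : ℝ → ℝ → ℝ) : Prop where
  hf : ContDiff ℝ (⊤ : ℕ∞) f
  hσ : 0 < σ
  hconv : ∀ y, σ ≤ iteratedDeriv 2 f y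
  hν : 0 < ν
  hu : ContDiffOn ℝ (⊤ : ℕ∞) (Function.uncurry u) (Ici (0:ℝ) ×ˢ univ)
  hper : ∀ t x, u t (x + 1) = u t x
  hpde : ∀ t, 0 < t → ∀ x,
    deriv (fun s => u s x) t + deriv f (u t x) * deriv (u t) x
      - ν * deriv (deriv (u t)) x = 0
  hmean : ∀ t, 0 ≤ t → ∫ x in Ioc (0:ℝ) 1, u t x = 0
  hinit : ∃ x, u 0 x ≠ 0

/-- The quantity `D = max(|u₀|₁⁻¹, |u₀|_{1,∞})`. -/
noncomputable def burgersD (u : ℝ → ℝ → ℝ) : ℝ :=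
  max (sobLp 0 1 (u 0))⁻¹ (sobLp 1 ⊤ (u 0))

/-- `T₁ = D⁻² C̃⁻¹ / 4`. -/
noncomputable def burgersT₁ (D Ct : ℝ) : ℝ := (D ^ 2)⁻¹ * Ct⁻¹ / 4

/-- `T₂ = max(3T₁/2, 2Dσ⁻¹)`. -/
noncomputable def burgersT₂ (σ D Ct : ℝ) : ℝ :=
  max (3 / 2 * burgersT₁ D Ct) (2 * D * σ⁻¹)

/-- Time average over `[T₁, T₂]`. -/
noncomputable def timeAvg (T₁ T₂ : ℝ) (A : ℝ → ℝ) : ℝ :=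
  (T₂ - T₁)⁻¹ * ∫ t in T₁..T₂, A t

/-- The structure function `S_p(ℓ)`. -/
noncomputable def structFun (T₁ T₂ : ℝ) (u : ℝ → ℝ → ℝ) (p ℓ : ℝ) : ℝ :=
  timeAvg T₁ T₂ (fun t => ∫ x in Ioc (0:ℝ) 1, |u t (x + ℓ) - u t x| ^ p)

section helpers

open Function

/-- The closed half-plane on which solutions live. -/
def halfPl : Set (ℝ × ℝ) := Ici (0:ℝ) ×ˢ univ

lemma halfPl_unique : UniqueDiffOn ℝ halfPl :=
  (uniqueDiffOn_Ici 0).prod uniqueDiffOn_univ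

lemma halfPl_nhds {t : ℝ} (ht : 0 < t) (x : ℝ) : halfPl ∈ nhds (t, x) := by
  have : halfPl ⊇ (Ioi (0:ℝ) ×ˢ univ) := prod_mono Ioi_subset_Ici_self (subset_refl _)
  refine Filter.mem_of_superset ?_ this
  exact (isOpen_Ioi.prod isOpen_univ).mem_nhds ⟨ht, mem_univ _⟩

lemma hasDerivAt_dx {w : ℝ → ℝ → ℝ} (hw : ContDiffOn ℝ (⊤ : ℕ∞) (uncurry w) halfPl)
    {t : ℝ} (ht : 0 ≤ t) (x : ℝ) :
    HasDerivAt (w t) (fderivWithin ℝ (uncurry w) halfPl (t, x) (0, 1)) x := by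
  have h1 : HasFDerivWithinAt (uncurry w) (fderivWithin ℝ (uncurry w) halfPl (t, x)) halfPl (t, x) :=
    ((hw.differentiableOn (by simp)) (t, x) ⟨ht, mem_univ _⟩).hasFDerivWithinAt
  have h2 : HasDerivWithinAt (fun y : ℝ => ((t, y) : ℝ × ℝ)) (0, 1) univ x :=
    ((hasDerivAt_const x t).prodMk (hasDerivAt_id x)).hasDerivWithinAt
  have := h1.comp_hasDerivWithinAt x h2 (fun y _ => ⟨ht, mem_univ _⟩)
  exact hasDerivWithinAt_univ.1 this

lemma contDiffOn_dx {w : ℝ → ℝ → ℝ} (hw : ContDiffOn ℝ (⊤ : ℕ∞) (uncurry w) halfPl) :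
    ContDiffOn ℝ (⊤ : ℕ∞) (uncurry fun t x => deriv (w t) x) halfPl := by
  have h1 : ContDiffOn ℝ (⊤ : ℕ∞) (fderivWithin ℝ (uncurry w) halfPl) halfPl :=
    hw.fderivWithin halfPl_unique (by simp)
  have h2 := h1.clm_apply (contDiffOn_const (c := ((0, 1) : ℝ × ℝ)))
  refine h2.congr ?_
  rintro ⟨t, x⟩ ⟨ht, _⟩
  exact (hasDerivAt_dx hw ht x).deriv

lemma hasDerivAt_dt {w : ℝ → ℝ → ℝ} (hw : ContDiffOn ℝ (⊤ : ℕ∞) (uncurry w) halfPl)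
    {t : ℝ} (ht : 0 < t) (x : ℝ) :
    HasDerivAt (fun s => w s x) (fderivWithin ℝ (uncurry w) halfPl (t, x) (1, 0)) t := by
  have h1 : HasFDerivAt (uncurry w) (fderivWithin ℝ (uncurry w) halfPl (t, x)) (t, x) :=
    ((hw.differentiableOn (by simp)) (t, x) ⟨ht.le, mem_univ _⟩).hasFDerivWithinAt.hasFDerivAt
      (halfPl_nhds ht x)
  have h2 : HasDerivAt (fun y : ℝ => ((y, x) : ℝ × ℝ)) (1, 0) t :=
    ((hasDerivAt_id t).prodMk (hasDerivAt_const t x))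
  exact h1.comp_hasDerivAt t h2

lemma continuousOn_dt {w : ℝ → ℝ → ℝ} (hw : ContDiffOn ℝ (⊤ : ℕ∞) (uncurry w) halfPl) :
    ContinuousOn (fun p : ℝ × ℝ => deriv (fun s => w s p.2) p.1) (Ioi (0:ℝ) ×ˢ univ) := by
  have h1 : ContDiffOn ℝ (⊤ : ℕ∞) (fderivWithin ℝ (uncurry w) halfPl) halfPl :=
    hw.fderivWithin halfPl_unique (by simp)
  have h2 := (h1.clm_apply (contDiffOn_const (c := ((1, 0) : ℝ × ℝ)))).continuousOn
  have h3 := h2.mono (prod_mono Ioi_subset_Ici_self (subset_refl _) :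
    (Ioi (0:ℝ) ×ˢ univ : Set (ℝ × ℝ)) ⊆ halfPl)
  refine h3.congr ?_
  rintro ⟨t, x⟩ ⟨ht, _⟩
  exact (hasDerivAt_dt hw ht x).deriv

/-- Mixed partial derivatives commute. -/
lemma mixed_partial {w : ℝ → ℝ → ℝ} (hw : ContDiffOn ℝ (⊤ : ℕ∞) (uncurry w) halfPl)
    {t : ℝ} (ht : 0 < t) (x : ℝ) :
    deriv (fun s => deriv (w s) x) t = deriv (fun y => deriv (fun s => w s y) t) x := by
  have hc : ContDiffAt ℝ (⊤ : ℕ∞) (uncurry w) (t, x) := hw.contDiffAt (halfPl_nhds ht x)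
  have hd : ∀ s > 0, ∀ y, HasFDerivAt (uncurry w) (fderiv ℝ (uncurry w) (s, y)) (s, y) := by
    intro s hs y
    exact ((hw.contDiffAt (halfPl_nhds hs y)).differentiableAt (by simp)).hasFDerivAt
  have hs : IsSymmSndFDerivAt ℝ (uncurry w) (t, x) := by
    refine hc.isSymmSndFDerivAt ?_
    rw [minSmoothness_of_isRCLikeNormedField]
    exact WithTop.coe_le_coe.2 (le_top : (2 : ℕ∞) ≤ ⊤)
  have hdd : HasFDerivAt (fderiv ℝ (uncurry w)) (fderiv ℝ (fderiv ℝ (uncurry w)) (t, x)) (t, x) := by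
    refine DifferentiableAt.hasFDerivAt ?_
    exact (hc.fderiv_right (m := 1) (by norm_cast)).differentiableAt (by simp)
  have e1 : (fun s => deriv (w s) x) =ᶠ[nhds t] fun s => fderiv ℝ (uncurry w) (s, x) (0, 1) := by
    filter_upwards [Ioi_mem_nhds ht] with s hs'
    exact ((hd s hs' x).comp_hasDerivAt x
      ((hasDerivAt_const x s).prodMk (hasDerivAt_id x))).deriv
  have e2 : (fun y => deriv (fun s => w s y) t) = fun y => fderiv ℝ (uncurry w) (t, y) (1, 0) := by
    ext y
    exact ((hd t ht y).comp_hasDerivAt t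
      ((hasDerivAt_id t).prodMk (hasDerivAt_const t y))).deriv
  rw [e1.deriv_eq, e2]
  have d1 : HasDerivAt (fun s => fderiv ℝ (uncurry w) (s, x)) 
      (fderiv ℝ (fderiv ℝ (uncurry w)) (t, x) (1, 0)) t :=
    hdd.comp_hasDerivAt t ((hasDerivAt_id t).prodMk (hasDerivAt_const t x))
  have d2 : HasDerivAt (fun y => fderiv ℝ (uncurry w) (t, y)) 
      (fderiv ℝ (fderiv ℝ (uncurry w)) (t, x) (0, 1)) x :=
    hdd.comp_hasDerivAt x ((hasDerivAt_const x t).prodMk (hasDerivAt_id x))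
  have d1' := (d1.clm_apply (hasDerivAt_const t ((0,1):ℝ×ℝ))).deriv
  have d2' := (d2.clm_apply (hasDerivAt_const x ((1,0):ℝ×ℝ))).deriv
  rw [d1', d2']
  simpa using hs (1,0) (0,1)

/-- second derivative test, necessary condition -/
lemma deriv2_nonpos {g : ℝ → ℝ} {x : ℝ} (hg : ContinuousAt g x) (hm : ∀ y, g y ≤ g x) :
    deriv g x = 0 ∧ deriv (deriv g) x ≤ 0 := by
  have hmax : IsLocalMax g x := Filter.Eventually.of_forall hm
  refine ⟨hmax.deriv_eq_zero, ?_⟩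
  by_contra! h
  have hmin := isLocalMin_of_deriv_deriv_pos h hmax.deriv_eq_zero hg
  have he : g =ᶠ[nhds x] fun _ => g x := by
    filter_upwards [hmin] with y hy using le_antisymm (hm y) hy
  have h2 : deriv g =ᶠ[nhds x] fun _ => 0 := by
    have := he.deriv
    simpa using this
  have := h2.deriv_eq
  simp at this
  linarith

/-- derivative is nonnegative at a max from the left -/
lemma deriv_nonneg_of_left_max {g : ℝ → ℝ} {t g' : ℝ} (ht : 0 < t) (hg : HasDerivAt g g' t)
    (hm : ∀ s ∈ Icc 0 t, g s ≤ g t) : 0 ≤ g' := by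
  by_contra! h
  have h1 := hg.hasDerivWithinAt (s := Iio t)
  have h2 := hasDerivWithinAt_iff_tendsto_slope.1 h1
  rw [show Iio t \ {t} = Iio t by ext; simp] at h2
  have h3 := h2.eventually (gt_mem_nhds h)
  have h4 : ∀ᶠ s in nhdsWithin t (Iio t), s ∈ Ico 0 t := Ico_mem_nhdsLT ht
  obtain ⟨s, hs, hs2⟩ := (h3.and h4).exists
  have := hm s ⟨hs2.1, hs2.2.le⟩
  rw [slope_def_field] at hs
  have : 0 ≤ (g s - g t) / (s - t) := div_nonneg_of_nonpos (by linarith) (by linarith [hs2.2])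
  linarith

lemma per_deriv {w : ℝ → ℝ} (hp : ∀ x, w (x + 1) = w x) (x : ℝ) : deriv w (x + 1) = deriv w x := by
  rw [← deriv_comp_add_const]
  congr 1
  ext y
  exact hp y

lemma per_exists {w : ℝ → ℝ} (hp : ∀ x, w (x + 1) = w x) (x : ℝ) : ∃ y ∈ Icc (0:ℝ) 1, w x = w y := by
  obtain ⟨y, hy, h⟩ := Function.Periodic.exists_mem_Ico₀ (f := w) (c := 1) hp one_pos x
  exact ⟨y, ⟨hy.1, hy.2.le⟩, h⟩

variable {f : ℝ → ℝ} {σ ν : ℝ} {u : ℝ → ℝ → ℝ}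

namespace IsBurgersSolution

lemma hu' (h : IsBurgersSolution f σ ν u) : ContDiffOn ℝ (⊤ : ℕ∞) (uncurry u) halfPl := h.hu

lemma hv (h : IsBurgersSolution f σ ν u) :
    ContDiffOn ℝ (⊤ : ℕ∞) (uncurry fun t x => deriv (u t) x) halfPl := contDiffOn_dx h.hu'

lemma hvx (h : IsBurgersSolution f σ ν u) :
    ContDiffOn ℝ (⊤ : ℕ∞) (uncurry fun t x => deriv (deriv (u t)) x) halfPl :=
  contDiffOn_dx (w := fun t x => deriv (u t) x) h.hv

lemma du (h : IsBurgersSolution f σ ν u) {t : ℝ} (ht : 0 ≤ t) (x : ℝ) :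
    HasDerivAt (u t) (deriv (u t) x) x := (hasDerivAt_dx h.hu' ht x).differentiableAt.hasDerivAt

lemma dv (h : IsBurgersSolution f σ ν u) {t : ℝ} (ht : 0 ≤ t) (x : ℝ) :
    HasDerivAt (deriv (u t)) (deriv (deriv (u t)) x) x :=
  (hasDerivAt_dx (w := fun t x => deriv (u t) x) h.hv ht x).differentiableAt.hasDerivAt

lemma dvx (h : IsBurgersSolution f σ ν u) {t : ℝ} (ht : 0 ≤ t) (x : ℝ) :
    HasDerivAt (deriv (deriv (u t))) (deriv (deriv (deriv (u t))) x) x :=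
  (hasDerivAt_dx (w := fun t x => deriv (deriv (u t)) x) h.hvx ht x).differentiableAt.hasDerivAt

lemma df (h : IsBurgersSolution f σ ν u) (y : ℝ) : HasDerivAt f (deriv f y) y :=
  (h.hf.differentiable (by simp) y).hasDerivAt

lemma ddf (h : IsBurgersSolution f σ ν u) (y : ℝ) : HasDerivAt (deriv f) (deriv (deriv f) y) y := by
  have : ContDiff ℝ (⊤ : ℕ∞) (deriv f) := (contDiff_infty_iff_deriv.1 h.hf).2
  exact (this.differentiable (by simp) y).hasDerivAt

lemma vt_le (h : IsBurgersSolution f σ ν u) {t : ℝ} (ht : 0 < t) {x : ℝ}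
    (hm : ∀ y, deriv (u t) y ≤ deriv (u t) x) :
    ∃ d, HasDerivAt (fun s => deriv (u s) x) d t ∧ d ≤ - (σ * deriv (u t) x ^ 2) := by
  have h1 := (hasDerivAt_dt (w := fun t x => deriv (u t) x) h.hv ht x).differentiableAt.hasDerivAt
  refine ⟨_, h1, ?_⟩
  rw [mixed_partial h.hu' ht x]
  have e : (fun y => deriv (fun s => u s y) t) = fun y => ν * deriv (deriv (u t)) y
      - deriv f (u t y) * deriv (u t) y := by
    ext y
    linarith [h.hpde t ht y]
  have hd : HasDerivAt (fun y => ν * deriv (deriv (u t)) y - deriv f (u t y) * deriv (u t) y)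
      (ν * deriv (deriv (deriv (u t))) x - (deriv (deriv f) (u t x) * deriv (u t) x * deriv (u t) x
        + deriv f (u t x) * deriv (deriv (u t)) x)) x :=
    ((h.dvx ht.le x).const_mul ν).sub
      (((h.ddf (u t x)).comp x (h.du ht.le x)).mul (h.dv ht.le x))
  rw [e, hd.deriv]
  obtain ⟨a, b⟩ := deriv2_nonpos (h.dv ht.le x).continuousAt hm
  rw [a]
  have hc := h.hconv (u t x)
  rw [iteratedDeriv_succ, iteratedDeriv_one] at hc
  have := mul_le_mul_of_nonneg_right hc (sq_nonneg (deriv (u t) x))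
  have := mul_nonneg h.hν.le (neg_nonneg.2 b)
  nlinarith

lemma v_per (h : IsBurgersSolution f σ ν u) (t x : ℝ) : deriv (u t) (x + 1) = deriv (u t) x :=
  per_deriv (h.hper t) x

lemma exists_max (h : IsBurgersSolution f σ ν u) (φ : ℝ → ℝ) (hφ : Continuous φ) {T : ℝ} (hT : 0 ≤ T) :
    ∃ t ∈ Icc 0 T, ∃ x, ∀ s ∈ Icc 0 T, ∀ y, φ s * deriv (u s) y ≤ φ t * deriv (u t) x := by
  have hc : ContinuousOn (fun p : ℝ × ℝ => φ p.1 * deriv (u p.1) p.2) (Icc 0 T ×ˢ Icc 0 1) := by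
    refine (hφ.comp continuous_fst).continuousOn.mul ?_
    exact h.hv.continuousOn.mono (prod_mono Icc_subset_Ici_self (subset_univ _))
  obtain ⟨p, hp, hm⟩ := (isCompact_Icc.prod isCompact_Icc).exists_isMaxOn
    ⟨(0, 0), ⟨⟨le_refl _, hT⟩, ⟨le_refl _, zero_le_one⟩⟩⟩ hc
  refine ⟨p.1, hp.1, p.2, fun s hs y => ?_⟩
  obtain ⟨z, hz, e⟩ := per_exists (h.v_per s) y
  rw [e]
  exact hm (a := (s, z)) ⟨hs, hz⟩

lemma v_le (h : IsBurgersSolution f σ ν u) {D : ℝ} (hD : 0 < D) (h0 : ∀ x, deriv (u 0) x ≤ D)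
    {T : ℝ} (hT : 0 ≤ T) (y : ℝ) : deriv (u T) y ≤ D := by
  obtain ⟨t, ht, x, hm⟩ := h.exists_max (fun _ => 1) continuous_const hT
  simp only [one_mul] at hm
  refine (hm T ⟨hT, le_refl _⟩ y).trans ?_
  rcases ht.1.eq_or_lt with rfl | htp
  · exact h0 x
  by_contra! hlt
  obtain ⟨d, hd, hle⟩ := h.vt_le htp (fun y => hm t ht y)
  have := deriv_nonneg_of_left_max htp hd (fun s hs => hm s ⟨hs.1, hs.2.trans ht.2⟩ x)
  have : 0 < σ * deriv (u t) x ^ 2 := mul_pos h.hσ (pow_pos (hD.trans hlt) 2)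
  linarith

lemma v_le' (h : IsBurgersSolution f σ ν u) {T : ℝ} (hT : 0 < T) (y : ℝ) :
    deriv (u T) y ≤ 1 / (σ * T) := by
  obtain ⟨t, ht, x, hm⟩ := h.exists_max (fun t => t) continuous_id hT.le
  have hσ := h.hσ
  rw [le_div_iff₀ (mul_pos h.hσ hT)]
  have key : t * deriv (u t) x ≤ 1 / σ := by
    rcases ht.1.eq_or_lt with rfl | htp
    · simp [hσ.le]
    by_contra! hlt
    obtain ⟨d, hd, hle⟩ := h.vt_le htp (fun y => le_of_mul_le_mul_left (hm t ht y) htp)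
    have h1 := (hasDerivAt_id t).mul hd
    have := deriv_nonneg_of_left_max htp h1 (fun s hs => hm s ⟨hs.1, hs.2.trans ht.2⟩ x)
    simp only [id, one_mul] at this
    rw [div_lt_iff₀ hσ] at hlt
    have hv : 0 < deriv (u t) x := by
      by_contra! hv
      have := mul_nonneg (mul_nonneg htp.le (neg_nonneg.2 hv)) hσ.le
      linarith
    have h2 := mul_le_mul_of_nonneg_left hle htp.le
    have h3 := mul_lt_mul_of_pos_right hlt hv
    nlinarith
  have := (hm T ⟨hT.le, le_refl _⟩ y).trans key
  rw [le_div_iff₀ hσ] at this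
  linarith

end IsBurgersSolution

lemma int_shift {g : ℝ → ℝ} (hp : ∀ x, g (x + 1) = g x) (l : ℝ) :
    ∫ x in (0:ℝ)..1, g (x + l) = ∫ x in (0:ℝ)..1, g x := by
  rw [intervalIntegral.integral_comp_add_right, add_comm 1 l]
  have := Function.Periodic.intervalIntegral_add_eq (f := g) (T := 1) hp (0 + l) 0
  simpa using this

lemma int_shift_sub {g : ℝ → ℝ} (hg : Continuous g) (hp : ∀ x, g (x + 1) = g x) (l : ℝ) :
    ∫ x in (0:ℝ)..1, (g (x + l) - g x) = 0 := by
  have hc : Continuous fun x => g (x + l) := by fun_prop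
  rw [intervalIntegral.integral_sub (hc.intervalIntegrable _ _) (hg.intervalIntegrable _ _),
    int_shift hp, sub_self]

lemma int_abs_le {φ : ℝ → ℝ} (hφ : Continuous φ) {B : ℝ} (hB : 0 ≤ B) (hle : ∀ x, φ x ≤ B)
    (h0 : ∫ x in (0:ℝ)..1, φ x = 0) : ∫ x in (0:ℝ)..1, |φ x| ≤ 2 * B := by
  have h1 : ∫ x in (0:ℝ)..1, |φ x| ≤ ∫ x in (0:ℝ)..1, (2 * B - φ x) := by
    refine intervalIntegral.integral_mono_on zero_le_one (hφ.abs.intervalIntegrable _ _)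
      ((continuous_const.sub hφ).intervalIntegrable _ _) (fun x _ => ?_)
    rw [abs_le]
    constructor <;> linarith [hle x]
  rw [intervalIntegral.integral_sub (by simp) (hφ.intervalIntegrable _ _), h0] at h1
  simpa using h1

lemma abs_int_mul_le {a b : ℝ → ℝ} (ha : Continuous a) (hb : Continuous b) {A : ℝ}
    (hA : ∀ x, |a x| ≤ A) : |∫ x in (0:ℝ)..1, a x * b x| ≤ A * ∫ x in (0:ℝ)..1, |b x| := by
  refine (intervalIntegral.abs_integral_le_integral_abs zero_le_one).trans ?_
  rw [← intervalIntegral.integral_const_mul]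
  refine intervalIntegral.integral_mono_on zero_le_one ((ha.mul hb).abs.intervalIntegrable _ _)
      ((continuous_const.mul hb.abs).intervalIntegrable _ _) (fun x _ => ?_)
  rw [abs_mul]
  exact mul_le_mul_of_nonneg_right (hA x) (abs_nonneg _)

lemma incr_le {w z : ℝ → ℝ} (hw : ∀ x, HasDerivAt w (z x) x) {M : ℝ} (hz : ∀ x, z x ≤ M)
    {x y : ℝ} (hxy : x ≤ y) : w y - w x ≤ M * (y - x) := by
  refine Convex.image_sub_le_mul_sub_of_deriv_le convex_univ
    (fun x _ => (hw x).continuousAt.continuousWithinAt)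
    (fun x _ => (hw x).differentiableAt.differentiableWithinAt)
    (fun x _ => ?_) x (mem_univ _) y (mem_univ _) hxy
  rw [(hw x).deriv]
  exact hz x

lemma cont_of_deriv {w z : ℝ → ℝ} (hw : ∀ x, HasDerivAt w (z x) x) : Continuous w :=
  continuous_iff_continuousAt.2 fun x => (hw x).continuousAt

lemma abs_le_of_deriv {w z : ℝ → ℝ} (hw : ∀ x, HasDerivAt w (z x) x) (hp : ∀ x, w (x + 1) = w x)
    (h0 : ∫ x in (0:ℝ)..1, w x = 0) {M : ℝ} (hM : 0 ≤ M) (hz : ∀ x, z x ≤ M) (x : ℝ) :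
    |w x| ≤ M := by
  have hc := cont_of_deriv hw
  have hc1 : Continuous fun s => w (s + x) := by fun_prop
  have hc2 : Continuous fun s => w (s + (x - 1)) := by fun_prop
  have e1 := int_shift hp x
  have e2 := int_shift hp (x - 1)
  rw [h0] at e1 e2
  have i1 : ∫ s in (0:ℝ)..1, w (s + x) ≤ ∫ s in (0:ℝ)..1, (w x + M) := by
    refine intervalIntegral.integral_mono_on zero_le_one (hc1.intervalIntegrable _ _)
      (by simp) (fun s hs => ?_)
    have := incr_le hw hz (show x ≤ s + x by linarith [hs.1])
    nlinarith [hs.1, hs.2]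
  have i2 : ∫ s in (0:ℝ)..1, (w x - M) ≤ ∫ s in (0:ℝ)..1, w (s + (x - 1)) := by
    refine intervalIntegral.integral_mono_on zero_le_one 
      (by simp) (hc2.intervalIntegrable _ _) (fun s hs => ?_)
    have := incr_le hw hz (show s + (x - 1) ≤ x by linarith [hs.2])
    nlinarith [hs.1, hs.2]
  rw [e1] at i1
  rw [e2] at i2
  simp at i1 i2
  rw [abs_le]
  constructor <;> linarith

/-- trapezoidal bound -/
lemma trapezoid {f : ℝ → ℝ} (hf : Continuous f) {D K : ℝ} 
    (hK : ∀ x ∈ Icc (-D) D, ∀ y ∈ Icc (-D) D, |f x - f y| ≤ K * |x - y|)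
    (hK0 : 0 ≤ K)
    {a b : ℝ} (ha : a ∈ Icc (-D) D) (hb : b ∈ Icc (-D) D) :
    |(b - a) * (f a + f b) - 2 * ((∫ y in (0:ℝ)..b, f y) - ∫ y in (0:ℝ)..a, f y)|
      ≤ 2 * K * (b - a) ^ 2 := by
  have hd : ∀ y ∈ uIcc a b, HasDerivWithinAt (fun y => (f a + f b) * y - 2 * ∫ s in (0:ℝ)..y, f s)
      ((f a + f b) * 1 - 2 * f y) (uIcc a b) y := by
    intro y _
    exact (((hasDerivAt_id y).const_mul _).sub ((hf.integral_hasStrictDerivAt 0 y).hasDerivAt.const_mul 2)).hasDerivWithinAt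
  have hb' : ∀ y ∈ uIcc a b, ‖(f a + f b) * 1 - 2 * f y‖ ≤ 2 * K * |b - a| := by
    intro y hy
    have hyD : y ∈ Icc (-D) D := (convex_Icc (-D) D).ordConnected.uIcc_subset ha hb hy
    have h1 := hK a ha y hyD
    have h2 := hK b hb y hyD
    have h3 : |a - y| ≤ |b - a| := by rw [abs_sub_comm]; exact abs_sub_left_of_mem_uIcc hy
    have h4 : |b - y| ≤ |b - a| := abs_sub_right_of_mem_uIcc hy
    have h5 := mul_le_mul_of_nonneg_left h3 hK0
    have h6 := mul_le_mul_of_nonneg_left h4 hK0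
    rw [Real.norm_eq_abs, show (f a + f b) * 1 - 2 * f y = (f a - f y) + (f b - f y) by ring]
    exact (abs_add_le _ _).trans (by linarith)
  have := (convex_uIcc a b).norm_image_sub_le_of_norm_hasDerivWithin_le hd hb' left_mem_uIcc right_mem_uIcc
  rw [Real.norm_eq_abs, Real.norm_eq_abs, mul_assoc, ← sq, sq_abs] at this
  refine le_trans (le_of_eq ?_) this
  congr 1
  ring

lemma flux_bound {f w : ℝ → ℝ} (hf : Continuous f) {D K : ℝ} 
    (hK : ∀ x ∈ Icc (-D) D, ∀ y ∈ Icc (-D) D, |f x - f y| ≤ K * |x - y|)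
    (hK0 : 0 ≤ K) (hw : Continuous w) (hp : ∀ x, w (x + 1) = w x) (hD : ∀ x, |w x| ≤ D) (l : ℝ) :
    |∫ x in (0:ℝ)..1, (f (w x) * w (x + l) - f (w (x + l)) * w x)|
      ≤ 2 * K * ∫ x in (0:ℝ)..1, (w (x + l) - w x) ^ 2 := by
  set Fa : ℝ → ℝ := fun y => ∫ s in (0:ℝ)..y, f s with hFa
  have hFc : Continuous Fa := intervalIntegral.continuous_primitive (fun a b => hf.intervalIntegrable a b) 0
  have z1 := int_shift_sub (g := fun x => w x * f (w x)) (by fun_prop) (fun x => by simp only [hp]) l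
  have z2 := int_shift_sub (g := fun x => Fa (w x)) (by fun_prop) (fun x => by simp only [hp]) l
  have e : ∫ x in (0:ℝ)..1, (f (w x) * w (x + l) - f (w (x + l)) * w x)
      = ∫ x in (0:ℝ)..1, ((w (x + l) - w x) * (f (w x) + f (w (x + l)))
        - 2 * (Fa (w (x + l)) - Fa (w x))) := by
    rw [← sub_eq_zero, ← intervalIntegral.integral_sub
      (Continuous.intervalIntegrable (by fun_prop) _ _) (Continuous.intervalIntegrable (by fun_prop) _ _)]
    have : ∀ x, f (w x) * w (x + l) - f (w (x + l)) * w x - ((w (x + l) - w x) * (f (w x) + f (w (x + l)))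
        - 2 * (Fa (w (x + l)) - Fa (w x))) = 2 * (Fa (w (x + l)) - Fa (w x)) - (w (x + l) * f (w (x + l)) - w x * f (w x)) := by
      intro x; ring
    simp only [this]
    rw [intervalIntegral.integral_sub
      (Continuous.intervalIntegrable (by fun_prop) _ _) (Continuous.intervalIntegrable (by fun_prop) _ _),
      intervalIntegral.integral_const_mul, z2, z1]
    simp
  rw [e]
  refine (intervalIntegral.abs_integral_le_integral_abs zero_le_one).trans ?_
  rw [← intervalIntegral.integral_const_mul]
  refine intervalIntegral.integral_mono_on zero_le_one (Continuous.intervalIntegrable (by fun_prop) _ _)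
     (Continuous.intervalIntegrable (by fun_prop) _ _) (fun x _ => ?_)
  exact trapezoid hf hK hK0 (abs_le.1 (hD x)) (abs_le.1 (hD (x + l)))

lemma int_deriv_zero {g g' : ℝ → ℝ} (hg : ∀ x, HasDerivAt g (g' x) x) (hc : Continuous g')
    (hp : ∀ x, g (x + 1) = g x) : ∫ x in (0:ℝ)..1, g' x = 0 := by
  rw [intervalIntegral.integral_eq_sub_of_hasDerivAt (fun x _ => hg x) (hc.intervalIntegrable _ _)]
  have := hp 0
  simp at this
  simp [this]

/-- The spatial identity behind the evolution of the correlation. -/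
lemma corr_identity {w z q q' : ℝ → ℝ} (hw : ∀ x, HasDerivAt w (z x) x)
    (hq : ∀ x, HasDerivAt q (q' x) x) (hq' : Continuous q')
    (hp : ∀ x, w (x + 1) = w x) (hpq : ∀ x, q (x + 1) = q x) (l : ℝ) :
    ∫ x in (0:ℝ)..1, (q' x * (∫ s in (0:ℝ)..l, w (x + s)) + w x * (q (x + l) - q x))
      = ∫ x in (0:ℝ)..1, (w x * q (x + l) - q x * w (x + l)) := by
  have hwc := cont_of_deriv hw
  have hqc := cont_of_deriv hq
  set g : ℝ → ℝ := fun x => ∫ s in (0:ℝ)..l, w (x + s) with hg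
  have hge : ∀ x, g x = (∫ s in (0:ℝ)..(x + l), w s) - ∫ s in (0:ℝ)..x, w s := by
    intro x
    rw [hg]
    simp only
    rw [intervalIntegral.integral_comp_add_left, add_zero,
      intervalIntegral.integral_interval_sub_left (hwc.intervalIntegrable _ _) (hwc.intervalIntegrable _ _)]
  have hgd : ∀ x, HasDerivAt g (w (x + l) - w x) x := by
    intro x
    have h1 := (hwc.integral_hasStrictDerivAt 0 x).hasDerivAt
    have h2 := ((hwc.integral_hasStrictDerivAt 0 (x + l)).hasDerivAt).comp_add_const x l
    exact (h2.sub h1).congr_of_eventuallyEq (Filter.Eventually.of_forall hge)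
  have hgc := cont_of_deriv hgd
  have hz := int_deriv_zero (g := fun x => q x * g x) (fun x => (hq x).mul (hgd x)) (by fun_prop)
    (fun x => by
      have : g (x + 1) = g x := by
        simp only [hg]
        congr 1
        ext s
        rw [show x + 1 + s = x + s + 1 by ring, hp]
      simp only [this, hpq])
  have e : ∀ x, q' x * g x + w x * (q (x + l) - q x) = (q' x * g x + q x * (w (x + l) - w x))
      + (w x * q (x + l) - q x * w (x + l)) := fun x => by ring
  change ∫ x in (0:ℝ)..1, (q' x * g x + w x * (q (x + l) - q x)) = _
  simp only [e]
  rw [intervalIntegral.integral_add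
      (Continuous.intervalIntegrable (by fun_prop) _ _) (Continuous.intervalIntegrable (by fun_prop) _ _),
    hz, zero_add]

lemma param_deriv {F F' : ℝ → ℝ → ℝ} (hF : ∀ t > 0, Continuous (F t))
    (hd : ∀ t > 0, ∀ x, HasDerivAt (fun s => F s x) (F' t x) t)
    (hF' : ContinuousOn (fun p : ℝ × ℝ => F' p.1 p.2) (Ioi (0:ℝ) ×ˢ univ)) (a b : ℝ) {t : ℝ} (ht : 0 < t) :
    HasDerivAt (fun s => ∫ x in a..b, F s x) (∫ x in a..b, F' t x) t := by
  have hsub : (Icc (t/2) (2*t) ×ˢ uIcc a b : Set (ℝ × ℝ)) ⊆ Ioi (0:ℝ) ×ˢ univ :=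
    prod_mono (fun s hs => by simp only [mem_Ioi]; linarith [hs.1]) (subset_univ _)
  obtain ⟨B, hB⟩ := (isCompact_Icc.prod isCompact_uIcc).exists_bound_of_continuousOn (hF'.mono hsub)
  have hc : Continuous (F' t) := by
    have := hF'.comp_continuous (f := fun x : ℝ => (t, x)) (by fun_prop) (fun x => ⟨ht, mem_univ _⟩)
    exact this
  refine (intervalIntegral.hasDerivAt_integral_of_dominated_loc_of_deriv_le (bound := fun _ => B)
    (s := Icc (t/2) (2*t)) (Icc_mem_nhds (by linarith) (by linarith)) ?_
    ((hF t ht).intervalIntegrable _ _) hc.aestronglyMeasurable ?_ (by simp) ?_).2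
  · filter_upwards [Ioi_mem_nhds ht] with s hs using (hF s hs).aestronglyMeasurable
  · refine Filter.Eventually.of_forall fun x hx s hs => hB (s, x) ⟨hs, uIoc_subset_uIcc hx⟩
  · refine Filter.Eventually.of_forall fun x hx s hs => hd s ?_ x
    have := hs.1
    simp only [gt_iff_lt]
    linarith

namespace IsBurgersSolution

/-- extension to all times -/
lemma cont_ext (h : IsBurgersSolution f σ ν u) : Continuous fun p : ℝ × ℝ => u (max p.1 0) p.2 :=
  h.hu.continuousOn.comp_continuous (f := fun p : ℝ × ℝ => (max p.1 0, p.2)) (by fun_prop)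
    (fun p => ⟨show (0:ℝ) ≤ max p.1 0 from le_max_right _ _, mem_univ _⟩)

lemma cont_v (h : IsBurgersSolution f σ ν u) {t : ℝ} (ht : 0 ≤ t) : Continuous (deriv (u t)) :=
  cont_of_deriv (h.dv ht)

lemma cont_u (h : IsBurgersSolution f σ ν u) {t : ℝ} (ht : 0 ≤ t) : Continuous (u t) :=
  cont_of_deriv (h.du ht)

lemma cont_vx (h : IsBurgersSolution f σ ν u) {t : ℝ} (ht : 0 ≤ t) : Continuous (deriv (deriv (u t))) :=
  cont_of_deriv (h.dvx ht)

lemma cont_f (h : IsBurgersSolution f σ ν u) : Continuous f := h.hf.continuous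

lemma dut (h : IsBurgersSolution f σ ν u) {t : ℝ} (ht : 0 < t) (x : ℝ) :
    HasDerivAt (fun s => u s x) (deriv (fun s => u s x) t) t :=
  (hasDerivAt_dt h.hu' ht x).differentiableAt.hasDerivAt

lemma dq (h : IsBurgersSolution f σ ν u) {t : ℝ} (ht : 0 < t) (x : ℝ) :
    HasDerivAt (fun y => ν * deriv (u t) y - f (u t y)) (deriv (fun s => u s x) t) x := by
  have h1 := ((h.dv ht.le x).const_mul ν).sub ((h.df (u t x)).comp x (h.du ht.le x))
  rw [show deriv (fun s => u s x) t = ν * deriv (deriv (u t)) x - deriv f (u t x) * deriv (u t) x by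
    linarith [h.hpde t ht x]]
  exact h1

lemma cont_ut (h : IsBurgersSolution f σ ν u) {t : ℝ} (ht : 0 < t) :
    Continuous (fun x => deriv (fun s => u s x) t) := by
  have := (continuousOn_dt h.hu').comp_continuous (f := fun x : ℝ => (t, x)) (by fun_prop)
    (fun x => ⟨ht, mem_univ _⟩)
  exact this

lemma q_per (h : IsBurgersSolution f σ ν u) (t x : ℝ) :
    ν * deriv (u t) (x + 1) - f (u t (x + 1)) = ν * deriv (u t) x - f (u t x) := by
  rw [h.hper, h.v_per]

lemma contOn_u (h : IsBurgersSolution f σ ν u) :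
    ContinuousOn (fun p : ℝ × ℝ => u p.1 p.2) (Ioi (0:ℝ) ×ˢ univ) :=
  h.hu.continuousOn.mono (prod_mono Ioi_subset_Ici_self (subset_refl _))

lemma contOn_v (h : IsBurgersSolution f σ ν u) :
    ContinuousOn (fun p : ℝ × ℝ => deriv (u p.1) p.2) (Ioi (0:ℝ) ×ˢ univ) :=
  h.hv.continuousOn.mono (prod_mono Ioi_subset_Ici_self (subset_refl _))

/-- energy balance -/
lemma energy_deriv (h : IsBurgersSolution f σ ν u) {t : ℝ} (ht : 0 < t) :
    HasDerivAt (fun s => ∫ x in (0:ℝ)..1, u s x ^ 2)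
      (- (2 * ν * ∫ x in (0:ℝ)..1, deriv (u t) x ^ 2)) t := by
  have h1 := param_deriv (F := fun s x => u s x ^ 2) (F' := fun s x => 2 * (u s x * deriv (fun r => u r x) s))
    (fun s hs => (h.cont_u hs.le).pow 2) (fun s hs x => by
      have := (h.dut hs x).mul (h.dut hs x)
      rw [show (fun s => u s x ^ 2) = (fun s => u s x) * (fun s => u s x) by ext; simp [sq]]
      rw [show ∀ a b : ℝ, 2 * (a * b) = b * a + a * b by intros; ring]
      exact this) (continuousOn_const.mul (h.contOn_u.mul (continuousOn_dt h.hu'))) 0 1 ht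
  convert h1 using 1
  have hc := h.cont_u ht.le
  have hv := h.cont_v ht.le
  have hut := h.cont_ut ht
  have hfc := h.cont_f
  have hz := int_deriv_zero (g := fun x => u t x * (ν * deriv (u t) x - f (u t x)))
    (fun x => (h.du ht.le x).mul (h.dq ht x)) (by fun_prop) (fun x => by rw [h.q_per, h.hper])
  have hz2 := int_deriv_zero (g := fun x => ∫ s in (0:ℝ)..(u t x), f s)
    (fun x => ((hfc.integral_hasStrictDerivAt 0 (u t x)).hasDerivAt).comp x (h.du ht.le x))
    (by fun_prop) (fun x => by rw [h.hper])
  have e : ∀ x, 2 * (u t x * deriv (fun r => u r x) t)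
     = 2 * (deriv (u t) x * (ν * deriv (u t) x - f (u t x)) + u t x * deriv (fun r => u r x) t)
      + (2 * (f (u t x) * deriv (u t) x) + (- (2 * ν)) * deriv (u t) x ^ 2) := fun x => by ring
  simp only [e]
  rw [intervalIntegral.integral_add
      (Continuous.intervalIntegrable (by fun_prop) _ _) (Continuous.intervalIntegrable (by fun_prop) _ _),
      intervalIntegral.integral_add
      (Continuous.intervalIntegrable (by fun_prop) _ _) (Continuous.intervalIntegrable (by fun_prop) _ _),
      intervalIntegral.integral_const_mul, hz, intervalIntegral.integral_const_mul, hz2,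
      intervalIntegral.integral_const_mul]
  ring

lemma energy_cont (h : IsBurgersSolution f σ ν u) :
    ContinuousOn (fun s => ∫ x in (0:ℝ)..1, u s x ^ 2) (Ici 0) := by
  have hc := h.cont_ext
  have := intervalIntegral.continuous_parametric_intervalIntegral_of_continuous' (μ := volume)
    (f := fun s x => u (max s 0) x ^ 2) (by exact hc.pow 2) 0 1
  refine this.continuousOn.congr fun s hs => ?_
  simp only [max_eq_left (show (0:ℝ) ≤ s from hs)]

/-- evolution of the integrated correlation -/
lemma corr_deriv (h : IsBurgersSolution f σ ν u) (l : ℝ) {t : ℝ} (ht : 0 < t) :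
    HasDerivAt (fun s => ∫ x in (0:ℝ)..1, u s x * ∫ r in (0:ℝ)..l, u s (x + r))
      (∫ x in (0:ℝ)..1, (u t x * (ν * deriv (u t) (x + l) - f (u t (x + l)))
        - (ν * deriv (u t) x - f (u t x)) * u t (x + l))) t := by
  have hG : ContinuousOn (fun p : ℝ × ℝ => ∫ r in (0:ℝ)..l, u p.1 (p.2 + r)) (Ioi (0:ℝ) ×ˢ univ) := by
    have hc : Continuous (fun q : (ℝ × ℝ) × ℝ => u (max q.1.1 0) (q.1.2 + q.2)) :=
      h.cont_ext.comp (g := fun p : ℝ × ℝ => u (max p.1 0) p.2)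
        (f := fun q : (ℝ × ℝ) × ℝ => (q.1.1, q.1.2 + q.2)) (by fun_prop)
    have := intervalIntegral.continuous_parametric_intervalIntegral_of_continuous' (μ := volume)
      (f := fun (p : ℝ × ℝ) r => u (max p.1 0) (p.2 + r)) hc 0 l
    refine this.continuousOn.congr fun p hp => ?_
    simp only [max_eq_left (show (0:ℝ) ≤ p.1 from le_of_lt hp.1)]
  have hGt : ∀ s > 0, ∀ x, HasDerivAt (fun s => ∫ r in (0:ℝ)..l, u s (x + r))
      ((ν * deriv (u s) (x + l) - f (u s (x + l))) - (ν * deriv (u s) x - f (u s x))) s := by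
    intro s hs x
    have h1 := param_deriv (F := fun s r => u s (x + r)) (F' := fun s r => deriv (fun q => u q (x + r)) s)
      (fun s hs => (h.cont_u hs.le).comp (by fun_prop)) (fun s hs r => h.dut hs (x + r))
      ((continuousOn_dt h.hu').comp (f := fun p : ℝ × ℝ => (p.1, x + p.2)) (by fun_prop)
        (fun p hp => ⟨hp.1, mem_univ _⟩)) 0 l hs
    convert h1 using 1
    rw [intervalIntegral.integral_comp_add_left (fun y => deriv (fun q => u q y) s), add_zero,
      intervalIntegral.integral_eq_sub_of_hasDerivAt (fun x _ => h.dq hs x)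
        ((h.cont_ut hs).intervalIntegrable _ _)]
  have hsh : ContinuousOn (fun p : ℝ × ℝ => (ν * deriv (u p.1) (p.2 + l) - f (u p.1 (p.2 + l)))
      - (ν * deriv (u p.1) p.2 - f (u p.1 p.2))) (Ioi (0:ℝ) ×ˢ univ) := by
    have hq : ContinuousOn (fun p : ℝ × ℝ => ν * deriv (u p.1) p.2 - f (u p.1 p.2)) (Ioi (0:ℝ) ×ˢ univ) :=
      (continuousOn_const.mul h.contOn_v).sub (h.cont_f.comp_continuousOn h.contOn_u)
    exact (hq.comp (f := fun p : ℝ × ℝ => (p.1, p.2 + l)) (by fun_prop)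
      (fun p hp => ⟨hp.1, mem_univ _⟩)).sub hq
  have h1 := param_deriv (F := fun s x => u s x * ∫ r in (0:ℝ)..l, u s (x + r))
    (F' := fun s x => deriv (fun r => u r x) s * (∫ r in (0:ℝ)..l, u s (x + r))
      + u s x * ((ν * deriv (u s) (x + l) - f (u s (x + l))) - (ν * deriv (u s) x - f (u s x))))
    (fun s hs => (h.cont_u hs.le).mul
      (hG.comp_continuous (f := fun x : ℝ => (s, x)) (by fun_prop) (fun x => ⟨hs, mem_univ _⟩)))
    (fun s hs x => (h.dut hs x).mul (hGt s hs x))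
    (((continuousOn_dt h.hu').mul hG).add (h.contOn_u.mul hsh)) 0 1 ht
  rw [corr_identity (h.du ht.le) (h.dq ht) (h.cont_ut ht) (h.hper t) (h.q_per t)] at h1
  exact h1

end IsBurgersSolution

lemma sob01 {w : ℝ → ℝ} (hw : Continuous w) : sobLp 0 1 w = ∫ x in (0:ℝ)..1, |w x| := by
  rw [sobLp, iteratedDeriv_zero, eLpNorm_one_eq_lintegral_enorm,
    ← integral_norm_eq_lintegral_enorm hw.aestronglyMeasurable,
    intervalIntegral.integral_of_le zero_le_one]
  rfl

lemma memLp_Ioc {w : ℝ → ℝ} (hw : Continuous w) (p : ℝ≥0∞) :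
    MemLp w p (volume.restrict (Ioc (0:ℝ) 1)) := by
  obtain ⟨B, hB⟩ := (isCompact_Icc (a := (0:ℝ)) (b := 1)).exists_bound_of_continuousOn hw.continuousOn
  refine MemLp.of_bound hw.aestronglyMeasurable B ?_
  filter_upwards [ae_restrict_mem measurableSet_Ioc] with x hx
  exact hB x (Ioc_subset_Icc_self hx)

lemma sob12 {w : ℝ → ℝ} (hw : Continuous (deriv w)) :
    sobLp 1 2 w ^ 2 = ∫ x in (0:ℝ)..1, deriv w x ^ 2 := by
  rw [sobLp, iteratedDeriv_one, (memLp_Ioc hw 2).eLpNorm_eq_integral_rpow_norm (by simp) (by simp),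
    intervalIntegral.integral_of_le zero_le_one]
  have h0 : 0 ≤ ∫ a in Ioc (0:ℝ) 1, ‖deriv w a‖ ^ (2:ℝ≥0∞).toReal :=
    integral_nonneg fun a => by positivity
  rw [ENNReal.toReal_ofReal (by positivity), ← Real.rpow_natCast, ← Real.rpow_mul h0]
  simp

lemma le_sob1top {w : ℝ → ℝ} (hw : Continuous (deriv w)) (hp : ∀ x, w (x + 1) = w x) (x : ℝ) :
    deriv w x ≤ sobLp 1 ⊤ w := by
  have hm := memLp_Ioc hw ⊤
  have hae : ∀ᵐ y ∂(volume.restrict (Ioc (0:ℝ) 1)), ‖deriv w y‖ ≤ sobLp 1 ⊤ w := by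
    have := ae_le_eLpNormEssSup (f := deriv w) (μ := volume.restrict (Ioc (0:ℝ) 1))
    filter_upwards [this] with y hy
    rw [sobLp, iteratedDeriv_one, eLpNorm_exponent_top]
    have h2 := ENNReal.toReal_mono (by rw [← eLpNorm_exponent_top]; exact hm.2.ne) hy
    simpa using h2
  have heq : (fun y => max (deriv w y) (sobLp 1 ⊤ w)) =ᵐ[volume.restrict (Ioc (0:ℝ) 1)]
      fun _ => sobLp 1 ⊤ w := by
    filter_upwards [hae] with y hy
    exact max_eq_right ((le_abs_self _).trans hy)
  have := Measure.eqOn_Ioc_of_ae_eq volume heq (by fun_prop) (by fun_prop)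
  obtain ⟨y, hy, e⟩ := Function.Periodic.exists_mem_Ioc (f := deriv w) (c := 1) (per_deriv hp) one_pos x 0
  rw [e]
  have h3 := this (by simpa using hy)
  simp only at h3
  rw [← h3]
  exact le_max_left _ _

lemma int_int_shift {w : ℝ → ℝ} (hw : Continuous w) (hp : ∀ x, w (x + 1) = w x)
    (h0 : ∫ x in (0:ℝ)..1, w x = 0) (l : ℝ) :
    ∫ x in (0:ℝ)..1, ∫ r in (0:ℝ)..l, w (x + r) = 0 := by
  have hc : Continuous (fun p : ℝ × ℝ => w (p.1 + p.2)) := by fun_prop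
  rw [intervalIntegral_intervalIntegral_swap]
  · simp only [int_shift hp, h0]
    simp
  · exact (hc.continuousOn.integrableOn_compact (isCompact_uIcc.prod isCompact_uIcc)).mono_set
      (prod_mono uIoc_subset_uIcc uIoc_subset_uIcc)

lemma corr_approx {w z : ℝ → ℝ} (hw : ∀ x, HasDerivAt w (z x) x) (hp : ∀ x, w (x + 1) = w x)
    (h0 : ∫ x in (0:ℝ)..1, w x = 0) {D : ℝ} (hD : 0 ≤ D) (hz : ∀ x, z x ≤ D) {l : ℝ} (hl : 0 ≤ l) :
    |(∫ x in (0:ℝ)..1, w x * ∫ r in (0:ℝ)..l, w (x + r)) - l * ∫ x in (0:ℝ)..1, w x ^ 2|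
      ≤ 2 * D ^ 2 * l ^ 2 := by
  have hwc := cont_of_deriv hw
  have hgc : Continuous fun x => ∫ r in (0:ℝ)..l, w (x + r) :=
    intervalIntegral.continuous_parametric_intervalIntegral_of_continuous' (μ := volume)
      (f := fun x r => w (x + r)) (by fun_prop) 0 l
  have hle : ∀ x, (∫ r in (0:ℝ)..l, w (x + r)) - l * w x ≤ D * l ^ 2 := by
    intro x
    have : ∫ r in (0:ℝ)..l, w (x + r) ≤ ∫ r in (0:ℝ)..l, (w x + D * l) := by
      refine intervalIntegral.integral_mono_on hl (Continuous.intervalIntegrable (by fun_prop) _ _)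
        (by simp) (fun r hr => ?_)
      have := incr_le hw hz (show x ≤ x + r by linarith [hr.1])
      have := mul_le_mul_of_nonneg_left hr.2 hD
      nlinarith
    rw [intervalIntegral.integral_const, smul_eq_mul, sub_zero] at this
    nlinarith
  have hz0 : ∫ x in (0:ℝ)..1, ((∫ r in (0:ℝ)..l, w (x + r)) - l * w x) = 0 := by
    rw [intervalIntegral.integral_sub (hgc.intervalIntegrable _ _)
      (Continuous.intervalIntegrable (by fun_prop) _ _), int_int_shift hwc hp h0,
      intervalIntegral.integral_const_mul, h0]
    simp
  have hhc : Continuous fun x => (∫ r in (0:ℝ)..l, w (x + r)) - l * w x := by fun_prop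
  have h1 := int_abs_le hhc (by positivity) hle hz0
  have h2 := abs_int_mul_le hwc hhc (abs_le_of_deriv hw hp h0 hD hz)
  have e : ∫ x in (0:ℝ)..1, w x * ((∫ r in (0:ℝ)..l, w (x + r)) - l * w x)
      = (∫ x in (0:ℝ)..1, w x * ∫ r in (0:ℝ)..l, w (x + r)) - l * ∫ x in (0:ℝ)..1, w x ^ 2 := by
    rw [← intervalIntegral.integral_const_mul, ← intervalIntegral.integral_sub
      (Continuous.intervalIntegrable (by fun_prop) _ _) (Continuous.intervalIntegrable (by fun_prop) _ _)]
    congr 1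
    ext x
    ring
  rw [e] at h2
  have := mul_le_mul_of_nonneg_left h1 hD
  nlinarith

/-- bounds on the increments at a fixed time -/
lemma incr_bounds {w z : ℝ → ℝ} (hw : ∀ x, HasDerivAt w (z x) x) (hp : ∀ x, w (x + 1) = w x)
    (h0 : ∫ x in (0:ℝ)..1, w x = 0) {D : ℝ} (hD : 0 ≤ D) (hz : ∀ x, z x ≤ D) {l : ℝ} (hl : 0 ≤ l)
    {ε : ℝ} (hε : 0 < ε) :
    (∫ x in (0:ℝ)..1, (w (x + l) - w x) ^ 2 ≤ 4 * D ^ 2 * l) ∧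
    (∫ x in (0:ℝ)..1, (w (x + l) - w x) ^ 4 ≤ 16 * D ^ 4 * l) ∧
    (∫ x in (0:ℝ)..1, (w (x + l) - w x) ^ 2
      ≤ ε * (2 * D * l) + (ε ^ 2)⁻¹ * ∫ x in (0:ℝ)..1, (w (x + l) - w x) ^ 4) := by
  have hwc := cont_of_deriv hw
  have hdc : Continuous fun x => w (x + l) - w x := by fun_prop
  have h1 : ∫ x in (0:ℝ)..1, |w (x + l) - w x| ≤ 2 * (D * l) := by
    refine int_abs_le hdc (by positivity) (fun x => ?_) (int_shift_sub hwc hp l)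
    have := incr_le hw hz (show x ≤ x + l by linarith)
    nlinarith
  have hb : ∀ x, |w (x + l) - w x| ≤ 2 * D := by
    intro x
    have a := abs_le.1 (abs_le_of_deriv hw hp h0 hD hz x)
    have b := abs_le.1 (abs_le_of_deriv hw hp h0 hD hz (x + l))
    rw [abs_le]
    constructor <;> linarith [a.1, a.2, b.1, b.2]
  refine ⟨?_, ?_, ?_⟩
  · have : ∫ x in (0:ℝ)..1, (w (x + l) - w x) ^ 2 ≤ ∫ x in (0:ℝ)..1, 2 * D * |w (x + l) - w x| := by
      refine intervalIntegral.integral_mono_on zero_le_one (Continuous.intervalIntegrable (by fun_prop) _ _)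
        (Continuous.intervalIntegrable (by fun_prop) _ _) (fun x _ => ?_)
      rw [← sq_abs, sq]
      exact mul_le_mul_of_nonneg_right (hb x) (abs_nonneg _)
    rw [intervalIntegral.integral_const_mul] at this
    have h2 := mul_le_mul_of_nonneg_left h1 (show 0 ≤ 2 * D by positivity)
    nlinarith
  · have : ∫ x in (0:ℝ)..1, (w (x + l) - w x) ^ 4 ≤ ∫ x in (0:ℝ)..1, (2 * D) ^ 3 * |w (x + l) - w x| := by
      refine intervalIntegral.integral_mono_on zero_le_one (Continuous.intervalIntegrable (by fun_prop) _ _)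
        (Continuous.intervalIntegrable (by fun_prop) _ _) (fun x _ => ?_)
      rw [show (w (x + l) - w x) ^ 4 = |w (x + l) - w x| ^ 3 * |w (x + l) - w x| by
        rw [← pow_succ, Even.pow_abs (by decide)]]
      exact mul_le_mul_of_nonneg_right (pow_le_pow_left₀ (abs_nonneg _) (hb x) 3) (abs_nonneg _)
    rw [intervalIntegral.integral_const_mul] at this
    have h2 := mul_le_mul_of_nonneg_left h1 (show 0 ≤ (2 * D) ^ 3 by positivity)
    refine this.trans (h2.trans (le_of_eq ?_))
    ring
  · have : ∫ x in (0:ℝ)..1, (w (x + l) - w x) ^ 2 ≤ ∫ x in (0:ℝ)..1, (ε * |w (x + l) - w x|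
        + (ε ^ 2)⁻¹ * (w (x + l) - w x) ^ 4) := by
      refine intervalIntegral.integral_mono_on zero_le_one (Continuous.intervalIntegrable (by fun_prop) _ _)
        (Continuous.intervalIntegrable (by fun_prop) _ _) (fun x _ => ?_)
      set a := |w (x + l) - w x| with ha
      rw [show (w (x + l) - w x) ^ 4 = a ^ 4 by rw [ha, Even.pow_abs (by decide)], ← sq_abs, ← ha]
      have ha0 : 0 ≤ a := abs_nonneg _
      rcases le_total a ε with hh | hh
      · have : a ^ 2 ≤ ε * a := by nlinarith
        have : 0 ≤ (ε ^ 2)⁻¹ * a ^ 4 := by positivity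
        linarith
      · have : a ^ 2 ≤ (ε ^ 2)⁻¹ * a ^ 4 := by
          rw [inv_mul_eq_div, le_div_iff₀ (by positivity)]
          have : ε ^ 2 ≤ a ^ 2 := pow_le_pow_left₀ hε.le hh 2
          nlinarith [sq_nonneg a]
        have : 0 ≤ ε * a := by positivity
        linarith
    rw [intervalIntegral.integral_add (Continuous.intervalIntegrable (by fun_prop) _ _)
        (Continuous.intervalIntegrable (by fun_prop) _ _), intervalIntegral.integral_const_mul,
        intervalIntegral.integral_const_mul] at this
    have h2 := mul_le_mul_of_nonneg_left h1 hε.le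
    linarith

lemma sq_int_abs_le {w : ℝ → ℝ} (hw : Continuous w) :
    (∫ x in (0:ℝ)..1, |w x|) ^ 2 ≤ ∫ x in (0:ℝ)..1, w x ^ 2 := by
  set m := ∫ x in (0:ℝ)..1, |w x| with hm
  have h1 : 0 ≤ ∫ x in (0:ℝ)..1, (|w x| - m) ^ 2 :=
    intervalIntegral.integral_nonneg zero_le_one fun x _ => sq_nonneg _
  have e : ∀ x, (|w x| - m) ^ 2 = w x ^ 2 + ((-2 * m) * |w x| + m ^ 2) := by
    intro x
    rw [← sq_abs (w x)]
    ring
  simp only [e] at h1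
  rw [intervalIntegral.integral_add (Continuous.intervalIntegrable (by fun_prop) _ _)
        (Continuous.intervalIntegrable (by fun_prop) _ _), intervalIntegral.integral_add (Continuous.intervalIntegrable (by fun_prop) _ _)
        (Continuous.intervalIntegrable (by fun_prop) _ _), intervalIntegral.integral_const_mul, ← hm] at h1
  simp at h1
  nlinarith

namespace IsBurgersSolution

lemma mean0 (h : IsBurgersSolution f σ ν u) {t : ℝ} (ht : 0 ≤ t) : ∫ x in (0:ℝ)..1, u t x = 0 := by
  rw [intervalIntegral.integral_of_le zero_le_one]
  exact h.hmean t ht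

lemma D_facts (h : IsBurgersSolution f σ ν u) {D : ℝ} (hD : burgersD u = D) :
    0 < D ∧ (∀ x, deriv (u 0) x ≤ D) ∧ (D ^ 2)⁻¹ ≤ ∫ x in (0:ℝ)..1, u 0 x ^ 2 := by
  have hc := h.cont_u (le_refl 0)
  have hm : 0 < ∫ x in (0:ℝ)..1, |u 0 x| := by
    obtain ⟨x, hx⟩ := h.hinit
    obtain ⟨y, hy, e⟩ := per_exists (h.hper 0) x
    rw [e] at hx
    exact intervalIntegral.integral_pos zero_lt_one hc.abs.continuousOn (fun _ _ => abs_nonneg _)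
      ⟨y, hy, abs_pos.2 hx⟩
  rw [burgersD, sob01 hc] at hD
  have h1 : (∫ x in (0:ℝ)..1, |u 0 x|)⁻¹ ≤ D := hD ▸ le_max_left _ _
  have hD0 : 0 < D := (inv_pos.2 hm).trans_le h1
  refine ⟨hD0, fun x => ?_, ?_⟩
  · exact (le_sob1top (h.cont_v (le_refl 0)) (h.hper 0) x).trans (hD ▸ le_max_right _ _)
  · refine le_trans ?_ (sq_int_abs_le hc)
    rw [← inv_pow]
    exact pow_le_pow_left₀ (inv_pos.2 hD0).le (inv_le_of_inv_le₀ hm h1) 2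

lemma energy_lower (h : IsBurgersSolution f σ ν u) {Ct : ℝ}
    (hb : ∀ t, 0 ≤ t → sobLp 1 2 (u t) ^ 2 ≤ Ct * ν⁻¹) {T : ℝ} (hT : 0 ≤ T) :
    (∫ x in (0:ℝ)..1, u 0 x ^ 2) - 2 * Ct * T ≤ ∫ x in (0:ℝ)..1, u T x ^ 2 := by
  have := Convex.mul_sub_le_image_sub_of_le_deriv (convex_Ici (0:ℝ)) h.energy_cont
    (fun t ht => by
      rw [interior_Ici] at ht
      exact (h.energy_deriv ht).differentiableAt.differentiableWithinAt)
    (C := - (2 * Ct)) (fun t ht => by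
      rw [interior_Ici] at ht
      rw [(h.energy_deriv ht).deriv, ← sob12 (h.cont_v (le_of_lt ht))]
      have h1 := mul_le_mul_of_nonneg_left (hb t (le_of_lt ht)) h.hν.le
      have : ν * (Ct * ν⁻¹) = Ct := by
        have := h.hν.ne'
        field_simp
      linarith) 0 (mem_Ici.2 le_rfl) T hT hT
  linarith

lemma energy_upper (h : IsBurgersSolution f σ ν u) {T M : ℝ} (hT : 0 < T) (hM : 1 / (σ * T) ≤ M) :
    ∫ x in (0:ℝ)..1, u T x ^ 2 ≤ M ^ 2 := by
  have hM0 : 0 ≤ M := le_trans (by have := h.hσ; positivity) hM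
  have hb := abs_le_of_deriv (h.du hT.le) (h.hper T) (h.mean0 hT.le) hM0
    (fun x => (h.v_le' hT x).trans hM)
  have : ∫ x in (0:ℝ)..1, u T x ^ 2 ≤ ∫ x in (0:ℝ)..1, M ^ 2 := by
    refine intervalIntegral.integral_mono_on zero_le_one (((h.cont_u hT.le).pow 2).intervalIntegrable _ _)
      (by simp) (fun x _ => ?_)
    rw [← sq_abs]
    exact pow_le_pow_left₀ (abs_nonneg _) (hb x) 2
  simpa using this

lemma corr_deriv_ge (h : IsBurgersSolution f σ ν u) {D K : ℝ} (hD : 0 < D)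
    (h0 : ∀ x, deriv (u 0) x ≤ D)
    (hK : ∀ x ∈ Icc (-D) D, ∀ y ∈ Icc (-D) D, |f x - f y| ≤ K * |x - y|)
    (hK0 : 0 ≤ K) {t : ℝ} (ht : 0 < t) (l : ℝ) :
    |∫ x in (0:ℝ)..1, (u t x * (ν * deriv (u t) (x + l) - f (u t (x + l)))
        - (ν * deriv (u t) x - f (u t x)) * u t (x + l))| ≤
     2 * K * (∫ x in (0:ℝ)..1, (u t (x + l) - u t x) ^ 2) + 4 * D ^ 2 * ν := by
  have hu := h.cont_u ht.le
  have hv := h.cont_v ht.le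
  have hf := h.cont_f
  have hvD := fun x => h.v_le hD h0 ht.le x
  have huD := abs_le_of_deriv (h.du ht.le) (h.hper t) (h.mean0 ht.le) hD.le hvD
  have hv0 := int_deriv_zero (h.du ht.le) hv (h.hper t)
  have hv1 := int_abs_le hv hD.le hvD hv0
  have hv2 : ∫ x in (0:ℝ)..1, |deriv (u t) (x + l)| ≤ 2 * D := by
    rw [int_shift (g := fun x => |deriv (u t) x|) (fun x => by rw [h.v_per])]
    exact hv1
  have hvl : Continuous fun x => deriv (u t) (x + l) := by fun_prop
  have hul : Continuous fun x => u t (x + l) := by fun_prop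
  have a1 := abs_int_mul_le hu hvl huD
  have a2 := abs_int_mul_le hul hv (fun x => huD (x + l))
  have a3 := flux_bound hf hK hK0 hu (h.hper t) huD l
  have e : ∀ x, u t x * (ν * deriv (u t) (x + l) - f (u t (x + l)))
        - (ν * deriv (u t) x - f (u t x)) * u t (x + l) =
      (f (u t x) * u t (x + l) - f (u t (x + l)) * u t x) +
       (ν * (u t x * deriv (u t) (x + l)) + (-ν) * (u t (x + l) * deriv (u t) x)) := fun x => by ring
  simp only [e]
  rw [intervalIntegral.integral_add (Continuous.intervalIntegrable (by fun_prop) _ _)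
        (Continuous.intervalIntegrable (by fun_prop) _ _),
      intervalIntegral.integral_add (Continuous.intervalIntegrable (by fun_prop) _ _)
        (Continuous.intervalIntegrable (by fun_prop) _ _),
      intervalIntegral.integral_const_mul, intervalIntegral.integral_const_mul]
  have b1 := a1.trans (mul_le_mul_of_nonneg_left hv2 hD.le)
  have b2 := a2.trans (mul_le_mul_of_nonneg_left hv1 hD.le)
  rw [abs_le] at *
  have c1 := mul_le_mul_of_nonneg_left b1.1 h.hν.le
  have c2 := mul_le_mul_of_nonneg_left b1.2 h.hν.le
  have c3 := mul_le_mul_of_nonneg_left b2.1 h.hν.le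
  have c4 := mul_le_mul_of_nonneg_left b2.2 h.hν.le
  constructor <;> nlinarith [a3.1, a3.2]

lemma sf_cont (h : IsBurgersSolution f σ ν u) (l : ℝ) (n : ℕ) :
    ContinuousOn (fun t => ∫ x in (0:ℝ)..1, (u t (x + l) - u t x) ^ n) (Ici 0) := by
  have hc := h.cont_ext
  have hc1 : Continuous fun p : ℝ × ℝ => u (max p.1 0) (p.2 + l) :=
    hc.comp (g := fun p : ℝ × ℝ => u (max p.1 0) p.2) (f := fun p : ℝ × ℝ => (p.1, p.2 + l)) (by fun_prop)
  have := intervalIntegral.continuous_parametric_intervalIntegral_of_continuous' (μ := volume)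
    (f := fun s x => (u (max s 0) (x + l) - u (max s 0) x) ^ n) (by exact (hc1.sub hc).pow n) 0 1
  refine this.continuousOn.congr fun s hs => ?_
  simp only [max_eq_left (show (0:ℝ) ≤ s from hs)]

lemma S2_lower (h : IsBurgersSolution f σ ν u) {D K T₁ T₂ : ℝ} (hD : 0 < D)
    (h0 : ∀ x, deriv (u 0) x ≤ D)
    (hK : ∀ x ∈ Icc (-D) D, ∀ y ∈ Icc (-D) D, |f x - f y| ≤ K * |x - y|)
    (hK0 : 0 ≤ K) (hT₁ : 0 < T₁) (hT : T₁ ≤ T₂) {l : ℝ} (hl : 0 ≤ l) :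
    l * ((∫ x in (0:ℝ)..1, u T₁ x ^ 2) - ∫ x in (0:ℝ)..1, u T₂ x ^ 2) - 4 * D ^ 2 * l ^ 2
      ≤ 2 * K * (∫ t in T₁..T₂, ∫ x in (0:ℝ)..1, (u t (x + l) - u t x) ^ 2)
        + 4 * D ^ 2 * ν * (T₂ - T₁) := by
  have hs : ContinuousOn (fun t => ∫ x in (0:ℝ)..1, (u t (x + l) - u t x) ^ 2) (Icc T₁ T₂) :=
    (h.sf_cont l 2).mono (fun t ht => hT₁.le.trans ht.1)
  have key := intervalIntegral.sub_le_integral_of_hasDeriv_right_of_le hT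
    (g := fun s => - ∫ x in (0:ℝ)..1, u s x * ∫ r in (0:ℝ)..l, u s (x + r))
    (φ := fun t => 2 * K * (∫ x in (0:ℝ)..1, (u t (x + l) - u t x) ^ 2) + 4 * D ^ 2 * ν)
    (fun t ht => (h.corr_deriv l (hT₁.trans_le ht.1)).neg.continuousAt.continuousWithinAt)
    (fun t ht => (h.corr_deriv l (hT₁.trans ht.1)).neg.hasDerivWithinAt)
    (ContinuousOn.integrableOn_Icc (by fun_prop))
    (fun t ht => (neg_le_abs _).trans (h.corr_deriv_ge hD h0 hK hK0 (hT₁.trans ht.1) l))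
  have hsi : IntervalIntegrable (fun t => ∫ x in (0:ℝ)..1, (u t (x + l) - u t x) ^ 2) volume T₁ T₂ :=
    ContinuousOn.intervalIntegrable_of_Icc hT hs
  rw [intervalIntegral.integral_add (hsi.const_mul _) (by simp), intervalIntegral.integral_const_mul,
    intervalIntegral.integral_const, smul_eq_mul] at key
  have hT₂ : 0 ≤ T₂ := hT₁.le.trans hT
  have a1 := abs_le.1 (corr_approx (h.du hT₁.le) (h.hper T₁) (h.mean0 hT₁.le) hD.le
    (fun x => h.v_le hD h0 hT₁.le x) hl)
  have a2 := abs_le.1 (corr_approx (h.du hT₂) (h.hper T₂) (h.mean0 hT₂) hD.le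
    (fun x => h.v_le hD h0 hT₂ x) hl)
  nlinarith [a1.1, a2.2]

lemma structFun_eq {T₁ T₂ l : ℝ} (n : ℕ) (hn : Even n) :
    structFun T₁ T₂ u n l = (T₂ - T₁)⁻¹ * ∫ t in T₁..T₂, ∫ x in (0:ℝ)..1, (u t (x + l) - u t x) ^ n := by
  rw [structFun, timeAvg]
  congr 2
  ext t
  rw [intervalIntegral.integral_of_le zero_le_one]
  congr 1
  ext x
  rw [Real.rpow_natCast, hn.pow_abs]

lemma time_bounds (h : IsBurgersSolution f σ ν u) {D T₁ T₂ : ℝ} (hD : 0 < D)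
    (h0 : ∀ x, deriv (u 0) x ≤ D) (hT₁ : 0 < T₁) (hT : T₁ ≤ T₂) {l : ℝ} (hl : 0 ≤ l)
    {ε : ℝ} (hε : 0 < ε) :
    (∫ t in T₁..T₂, ∫ x in (0:ℝ)..1, (u t (x + l) - u t x) ^ 2) ≤ (T₂ - T₁) * (4 * D ^ 2 * l) ∧
    (∫ t in T₁..T₂, ∫ x in (0:ℝ)..1, (u t (x + l) - u t x) ^ 4) ≤ (T₂ - T₁) * (16 * D ^ 4 * l) ∧
    (∫ t in T₁..T₂, ∫ x in (0:ℝ)..1, (u t (x + l) - u t x) ^ 2) ≤ (T₂ - T₁) * (ε * (2 * D * l))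
      + (ε ^ 2)⁻¹ * ∫ t in T₁..T₂, ∫ x in (0:ℝ)..1, (u t (x + l) - u t x) ^ 4 := by
  have hi : ∀ n : ℕ, IntervalIntegrable (fun t => ∫ x in (0:ℝ)..1, (u t (x + l) - u t x) ^ n) volume T₁ T₂ :=
    fun n => ContinuousOn.intervalIntegrable_of_Icc hT
      ((h.sf_cont l n).mono (fun t ht => hT₁.le.trans ht.1))
  have hb := fun t (ht : t ∈ Icc T₁ T₂) => incr_bounds (h.du (hT₁.le.trans ht.1)) (h.hper t)
    (h.mean0 (hT₁.le.trans ht.1)) hD.le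
    (fun x => h.v_le hD h0 (hT₁.le.trans ht.1) x) hl hε
  refine ⟨?_, ?_, ?_⟩
  · have := intervalIntegral.integral_mono_on hT (hi 2) (by simp) (fun t ht => (hb t ht).1)
    rwa [intervalIntegral.integral_const, smul_eq_mul] at this
  · have := intervalIntegral.integral_mono_on hT (hi 4) (by simp) (fun t ht => (hb t ht).2.1)
    rwa [intervalIntegral.integral_const, smul_eq_mul] at this
  · have := intervalIntegral.integral_mono_on hT (hi 2)
      ((intervalIntegrable_const (c := ε * (2 * D * l))).add ((hi 4).const_mul (ε ^ 2)⁻¹))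
      (fun t ht => (hb t ht).2.2)
    rwa [intervalIntegral.integral_add (by simp) ((hi 4).const_mul _),
      intervalIntegral.integral_const, smul_eq_mul, intervalIntegral.integral_const_mul] at this

end IsBurgersSolution

lemma final_alg {Δ D a ε l I2 I4 : ℝ} (hΔ : 0 < Δ) (hD : 0 < D) (ha : 0 < a) (hl : 0 < l)
    (hε : ε = a / (4 * D * Δ)) (h2l : a * l ≤ I2) (h2u : I2 ≤ Δ * (4 * D ^ 2 * l))
    (h4u : I4 ≤ Δ * (16 * D ^ 4 * l)) (h24 : I2 ≤ Δ * (ε * (2 * D * l)) + (ε ^ 2)⁻¹ * I4) :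
    (ε ^ 2 * a / 2 / (16 * D ^ 4 * Δ)) * l⁻¹ ≤ (Δ⁻¹ * I4) / (Δ⁻¹ * I2) ^ 2 ∧
      (Δ⁻¹ * I4) / (Δ⁻¹ * I2) ^ 2 ≤ (16 * D ^ 4 * Δ ^ 2 / a ^ 2) * l⁻¹ := by
  have hε0 : 0 < ε := by rw [hε]; positivity
  have hI2 : 0 < I2 := (mul_pos ha hl).trans_le h2l
  have e1 : Δ * (ε * (2 * D * l)) = a * l / 2 := by
    rw [hε]; field_simp; ring
  have h4l : ε ^ 2 * a / 2 * l ≤ I4 := by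
    have : a * l / 2 ≤ (ε ^ 2)⁻¹ * I4 := by linarith
    rw [inv_mul_eq_div, le_div_iff₀ (by positivity)] at this
    linarith
  have e2 : (Δ⁻¹ * I4) / (Δ⁻¹ * I2) ^ 2 = Δ * I4 / I2 ^ 2 := by
    field_simp
  have hI4 : 0 < I4 := lt_of_lt_of_le (by positivity) h4l
  rw [e2]
  constructor
  · have : (ε ^ 2 * a / 2 / (16 * D ^ 4 * Δ)) * l⁻¹
        = Δ * (ε ^ 2 * a / 2 * l) / (Δ * (4 * D ^ 2 * l)) ^ 2 := by
      field_simp; ring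
    rw [this]
    gcongr
  · have : (16 * D ^ 4 * Δ ^ 2 / a ^ 2) * l⁻¹ = Δ * (Δ * (16 * D ^ 4 * l)) / (a * l) ^ 2 := by
      field_simp
    rw [this]
    gcongr

end helpers

/-- There exist `ν₀ ∈ (0,1]`, `C₁ > 0`, `C₂ ∈ (C₁ν₀,1)` and
`c, C > 0` such that for every `ν ∈ (0,ν₀]` and every `ℓ` in the inertial range
`(C₁ν, C₂]`, the flatness `F(ℓ) = S₄(ℓ)/S₂(ℓ)²` satisfies
`c ℓ⁻¹ ≤ F(ℓ) ≤ C ℓ⁻¹`. -/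
theorem statement19 (f : ℝ → ℝ) (σ D Ct : ℝ) (hCt : 0 < Ct)
    (hCtb : ∀ ν, 0 < ν → ν ≤ 1 →
      ∀ u : ℝ → ℝ → ℝ, IsBurgersSolution f σ ν u → burgersD u = D →
        ∀ t, 0 ≤ t → sobLp 1 2 (u t) ^ 2 ≤ Ct * ν⁻¹) :
    ∃ ν₀ C₁ C₂ c C : ℝ, (0 < ν₀ ∧ ν₀ ≤ 1) ∧ 0 < C₁ ∧ (C₁ * ν₀ < C₂ ∧ C₂ < 1) ∧
      0 < c ∧ 0 < C ∧
      ∀ ν, 0 < ν → ν ≤ ν₀ →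
        ∀ u : ℝ → ℝ → ℝ, IsBurgersSolution f σ ν u → burgersD u = D →
          ∀ ℓ, C₁ * ν < ℓ → ℓ ≤ C₂ →
            c * ℓ⁻¹
              ≤ structFun (burgersT₁ D Ct) (burgersT₂ σ D Ct) u 4 ℓ
                  / (structFun (burgersT₁ D Ct) (burgersT₂ σ D Ct) u 2 ℓ) ^ 2 ∧
            structFun (burgersT₁ D Ct) (burgersT₂ σ D Ct) u 4 ℓ
                / (structFun (burgersT₁ D Ct) (burgersT₂ σ D Ct) u 2 ℓ) ^ 2
              ≤ C * ℓ⁻¹ := by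
  classical
  by_cases hex : ∃ ν u, IsBurgersSolution f σ ν u ∧ burgersD u = D
  swap
  · refine ⟨1, 1/4, 1/2, 1, 1, ⟨one_pos, le_rfl⟩, by norm_num, by norm_num, one_pos, one_pos, ?_⟩
    intro ν _ _ u hu hDu
    exact absurd ⟨ν, u, hu, hDu⟩ hex
  obtain ⟨ν', u', hs', hD'⟩ := hex
  have hD : 0 < D := (hs'.D_facts hD').1
  have hσ : 0 < σ := hs'.hσ
  have hK : ∃ K : ℝ, 0 < K ∧ ∀ x ∈ Icc (-D) D, ∀ y ∈ Icc (-D) D, |f x - f y| ≤ K * |x - y| := by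
    have hc : Continuous (deriv f) := cont_of_deriv hs'.ddf
    obtain ⟨B, hB⟩ := (isCompact_Icc (a := -D) (b := D)).exists_bound_of_continuousOn hc.continuousOn
    refine ⟨max B 1, by positivity, fun x hx y hy => ?_⟩
    exact (convex_Icc (-D) D).norm_image_sub_le_of_norm_deriv_le
      (fun z _ => (hs'.df z).differentiableAt) (fun z hz => (hB z hz).trans (le_max_left _ _)) hy hx
  obtain ⟨K, hK0, hK⟩ := hK
  set T₁ := burgersT₁ D Ct with hT₁
  set T₂ := burgersT₂ σ D Ct with hT₂
  have hT₁p : 0 < T₁ := by rw [hT₁, burgersT₁]; positivity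
  have hT₂a : 3 / 2 * T₁ ≤ T₂ := le_max_left _ _
  have hT₂b : 2 * D * σ⁻¹ ≤ T₂ := le_max_right _ _
  have hΔ : 0 < T₂ - T₁ := by linarith
  have hT₂p : 0 < T₂ := by linarith
  set C₁ : ℝ := 64 * D ^ 4 * (T₂ - T₁) with hC₁
  set C₂ : ℝ := min (1 / 2) (1 / (64 * D ^ 4)) with hC₂
  have hC₁p : 0 < C₁ := by positivity
  have hC₂p : 0 < C₂ := by positivity
  set a : ℝ := 1 / (16 * K * D ^ 2) with ha
  have hap : 0 < a := by positivity
  set ε : ℝ := a / (4 * D * (T₂ - T₁)) with hε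
  have hεp : 0 < ε := by positivity
  refine ⟨min 1 (C₂ / (2 * C₁)), C₁, C₂, ε ^ 2 * a / 2 / (16 * D ^ 4 * (T₂ - T₁)),
    16 * D ^ 4 * (T₂ - T₁) ^ 2 / a ^ 2, ⟨by positivity, min_le_left _ _⟩, hC₁p, ⟨?_, ?_⟩,
    by positivity, by positivity, ?_⟩
  · have : C₁ * min 1 (C₂ / (2 * C₁)) ≤ C₁ * (C₂ / (2 * C₁)) :=
      mul_le_mul_of_nonneg_left (min_le_right _ _) hC₁p.le
    have e : C₁ * (C₂ / (2 * C₁)) = C₂ / 2 := by field_simp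
    linarith
  · exact (min_le_left _ _).trans_lt (by norm_num)
  intro ν hν hν0 u h hDu ℓ hl1 hl2
  have hl : 0 < ℓ := (mul_pos hC₁p hν).trans hl1
  obtain ⟨_, hd0, hE0⟩ := h.D_facts hDu
  have hEl := h.energy_lower (hCtb ν hν (hν0.trans (min_le_left _ _)) u h hDu) hT₁p.le
  have hEu := h.energy_upper (M := 1 / (2 * D)) hT₂p (by
    refine one_div_le_one_div_of_le (by positivity) ?_
    have := mul_le_mul_of_nonneg_left hT₂b hσ.le
    have e : σ * (2 * D * σ⁻¹) = 2 * D := by field_simp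
    linarith)
  have hS := h.S2_lower hD hd0 hK hK0.le hT₁p (by linarith : T₁ ≤ T₂) hl.le
  obtain ⟨hb1, hb2, hb3⟩ := h.time_bounds hD hd0 hT₁p (by linarith : T₁ ≤ T₂) hl.le hεp
  rw [show (4 : ℝ) = ((4 : ℕ) : ℝ) by norm_num, show (2 : ℝ) = ((2 : ℕ) : ℝ) by norm_num,
    IsBurgersSolution.structFun_eq 4 (by decide), IsBurgersSolution.structFun_eq 2 (by decide)]
  refine final_alg hΔ hD hap hl hε ?_ hb1 hb2 hb3
  have e1 : 2 * Ct * T₁ = (D ^ 2)⁻¹ / 2 := by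
    rw [hT₁, burgersT₁]; field_simp; ring
  have e2 : (1 / (2 * D)) ^ 2 = (D ^ 2)⁻¹ / 4 := by field_simp; ring
  rw [e1] at hEl
  rw [e2] at hEu
  have hE : (D ^ 2)⁻¹ / 4 ≤ (∫ x in (0:ℝ)..1, u T₁ x ^ 2) - ∫ x in (0:ℝ)..1, u T₂ x ^ 2 := by linarith
  have g1 := mul_le_mul_of_nonneg_left hE hl.le
  have g2 : 4 * D ^ 2 * ℓ ^ 2 ≤ ℓ * ((D ^ 2)⁻¹ / 16) := by
    have : ℓ ≤ 1 / (64 * D ^ 4) := hl2.trans (min_le_right _ _)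
    have := mul_le_mul_of_nonneg_left this (show 0 ≤ 4 * D ^ 2 * ℓ by positivity)
    have e : 4 * D ^ 2 * ℓ * (1 / (64 * D ^ 4)) = ℓ * ((D ^ 2)⁻¹ / 16) := by field_simp; ring
    linarith
  have g3 : 4 * D ^ 2 * ν * (T₂ - T₁) ≤ ℓ * ((D ^ 2)⁻¹ / 16) := by
    have := mul_le_mul_of_nonneg_right hl1.le (show 0 ≤ (D ^ 2)⁻¹ / 16 by positivity)
    have e : C₁ * ν * ((D ^ 2)⁻¹ / 16) = 4 * D ^ 2 * ν * (T₂ - T₁) := by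
      rw [hC₁]; field_simp; ring
    linarith
  have g4 : ℓ * ((D ^ 2)⁻¹ / 8) ≤ 2 * K * ∫ t in T₁..T₂, ∫ x in (0:ℝ)..1, (u t (x + ℓ) - u t x) ^ 2 := by
    linarith
  have e3 : a * ℓ = ℓ * ((D ^ 2)⁻¹ / 8) / (2 * K) := by
    rw [ha]; field_simp; ring
  rw [e3, div_le_iff₀ (by positivity)]
  linarith
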